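/- Let G be a finite 3-group which is semi-3-abelian and generated by two elements. Then Ω₁(G) ≤ Z₃(G), the third term of the upper central series of G. -/

import Mathlib

/-!
In a semi-3-abelian group, if `x ^ 3 = 1` then `(x * a) ^ 3 = a ^ 3` for every `a`, so the product
of `x`, `a * x * a⁻¹` and `a ^ 2 * x * (a ^ 2)⁻¹` is trivial. Comparing this relation with the one
for `a⁻¹` shows that `x` commutes with its conjugates. Hence `⁅⁅x, a⁆, a⁆ = 1`, and the normal
closure of `x` is an abelian group of exponent dividing three on which every `a` acts with
`(1 - a) ^ 2 = 0`. Adding the expansions of `(1 - a * b) ^ 2 = 0` and `(1 - a⁻¹ * b) ^ 2 = 0` gives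
`2 * (1 - a) * (1 - b) * (1 - a) = 0`, and `2` is invertible here, so `⁅⁅⁅x, a⁆, b⁆, a⁆ = 1`. Three
letters taken from two generators always contain a repetition, so all triple commutators of `x` with
generators vanish.
-/

open scoped commutatorElement IsMulCommutative

section Ring

variable {R : Type*} [Ring R]

theorem two_mul_mul_mul_eq_zero_of_mul_self_eq_zero {u v : R} (hu : u * u = 0) (hv : v * v = 0)
    (huv : (u + v - u * v) * (u + v - u * v) = 0)
    (huv' : (-u + v + u * v) * (-u + v + u * v) = 0) : 2 * (u * v * u) = 0 := by
  have h : 2 * (u * v * u) * (1 - v) = 0 := by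
    linear_combination (norm := noncomm_ring) 2 * hu * (1 - v) + 2 * hv - huv - huv'
  calc 2 * (u * v * u) = 2 * (u * v * u) * (1 - v) * (1 + v) + 2 * (u * v * u) * (v * v) := by
        noncomm_ring
    _ = 0 := by rw [h, hv, zero_mul, mul_zero, add_zero]

theorem two_mul_one_sub_mul_one_sub_mul_one_sub_eq_zero {G : Type*} [Group G] (ρ : G →* R)
    (hρ : ∀ g, (1 - ρ g) * (1 - ρ g) = 0) (a b : G) :
    2 * ((1 - ρ a) * (1 - ρ b) * (1 - ρ a)) = 0 := by
  have map_inv : ρ a⁻¹ = 1 + (1 - ρ a) := by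
    have hinv : ρ a⁻¹ * ρ a = 1 := by rw [← map_mul, inv_mul_cancel, map_one]
    linear_combination (norm := noncomm_ring) ρ a⁻¹ * hρ a + hinv * (1 + (1 - ρ a))
  have one_sub_mul : 1 - ρ (a * b) = (1 - ρ a) + (1 - ρ b) - (1 - ρ a) * (1 - ρ b) := by
    rw [map_mul]
    noncomm_ring
  have one_sub_inv_mul : 1 - ρ (a⁻¹ * b) = -(1 - ρ a) + (1 - ρ b) + (1 - ρ a) * (1 - ρ b) := by
    rw [map_mul, map_inv]
    noncomm_ring
  exact two_mul_mul_mul_eq_zero_of_mul_self_eq_zero (hρ a) (hρ b) (one_sub_mul ▸ hρ (a * b))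
    (one_sub_inv_mul ▸ hρ (a⁻¹ * b))

end Ring

section Group

variable {G : Type*} [Group G]

theorem commutator_commutator_commutator_sq_eq_one {N : Subgroup G} [N.Normal] [IsMulCommutative N]
    (hN : ∀ x ∈ N, ∀ g : G, ⁅⁅x, g⁆, g⁆ = 1) {x : G} (hx : x ∈ N) (a b : G) :
    ⁅⁅⁅x, a⁆, b⁆, a⁆ ^ 2 = 1 := by
  let ρ : G →* AddMonoid.End (Additive N) :=
    (monoidEndToAdditive N).toMonoidHom.comp
      ((MulDistribMulAction.toMonoidEnd (MulAut N) N).comp MulAut.conjNormal)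
  have coe_one_sub (g : G) (y : Additive N) :
      (((1 - ρ g) y).toMul : G) = ⁅(y.toMul : G), g⁆ := by
    change (y.toMul : G) / (g * y.toMul * g⁻¹) = _
    rw [commutatorElement_def, div_eq_mul_inv]
    group
  have one_sub_sq (g : G) : (1 - ρ g) * (1 - ρ g) = 0 := by
    ext y
    change (((1 - ρ g) ((1 - ρ g) y)).toMul : G) = 1
    rw [coe_one_sub, coe_one_sub, hN _ y.toMul.2]
  let y : Additive N := Additive.ofMul ⟨x, hx⟩
  calc ⁅⁅⁅x, a⁆, b⁆, a⁆ ^ 2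
      = (((1 - ρ a) ((1 - ρ b) ((1 - ρ a) y))).toMul : G) ^ 2 := by
        rw [coe_one_sub, coe_one_sub, coe_one_sub]
        rfl
    _ = (((2 * ((1 - ρ a) * (1 - ρ b) * (1 - ρ a))) y).toMul : G) := by
        rw [sq, two_mul]
        rfl
    _ = 1 := by
        rw [two_mul_one_sub_mul_one_sub_mul_one_sub_eq_zero ρ one_sub_sq]
        rfl

theorem isMulCommutative_normalClosure_singleton {x : G} (hx : ∀ g, Commute x (g * x * g⁻¹)) :
    IsMulCommutative (Subgroup.normalClosure {x}) := by
  have isConj {y : G} (hy : y ∈ Group.conjugatesOfSet {x}) : IsConj x y := by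
    simpa only [Group.mem_conjugatesOfSet_iff, Set.mem_singleton_iff, exists_eq_left] using hy
  refine Subgroup.isMulCommutative_closure fun y hy z hz => ?_
  obtain ⟨g, rfl⟩ := isConj_iff.1 (isConj hy)
  obtain ⟨k, rfl⟩ := isConj_iff.1 (isConj hz)
  have h := (Commute.conj_iff g).2 (hx (g⁻¹ * k))
  rwa [show g * (g⁻¹ * k * x * (g⁻¹ * k)⁻¹) * g⁻¹ = k * x * k⁻¹ by group] at h

theorem commutatorElement_mem_of_closure_eq_top {N : Subgroup G} [N.Normal] {S : Set G}
    (hS : Subgroup.closure S = ⊤) {x : G} (hx : ∀ s ∈ S, ⁅x, s⁆ ∈ N) (g : G) : ⁅x, g⁆ ∈ N := by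
  have mem_iff (y : G) : ⁅x, y⁆ ∈ N ↔
      y ∈ (Subgroup.centralizer {(x : G ⧸ N)}).comap (QuotientGroup.mk' N) := by
    rw [← QuotientGroup.eq_one_iff, ← QuotientGroup.mk'_apply, map_commutatorElement,
      commutatorElement_eq_one_iff_mul_comm, Subgroup.mem_comap,
      Subgroup.mem_centralizer_singleton_iff, eq_comm]
    rfl
  have closure_le := (Subgroup.closure_le _).2 fun s hs => (mem_iff s).1 (hx s hs)
  exact (mem_iff g).2 (closure_le (hS ▸ Subgroup.mem_top g))

theorem mem_upperCentralSeries_succ_of_closure_eq_top {S : Set G} (hS : Subgroup.closure S = ⊤)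
    {n : ℕ} {x : G} (hx : ∀ s ∈ S, ⁅x, s⁆ ∈ Subgroup.upperCentralSeries G n) :
    x ∈ Subgroup.upperCentralSeries G (n + 1) :=
  Subgroup.mem_upperCentralSeries_succ_iff.2 (commutatorElement_mem_of_closure_eq_top hS hx)

end Group

/-- A group is semi-`n`-abelian if a product has trivial `n`-th power exactly when the product of
the `n`-th powers is trivial. -/
def IsSemiAbelian (n : ℕ) (G : Type*) [Group G] : Prop :=
  ∀ a b : G, (a * b) ^ n = 1 ↔ a ^ n * b ^ n = 1

namespace IsSemiAbelian

variable {G : Type*} [Group G] {n : ℕ} {x y : G}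

theorem div_pow_eq_one_iff (hG : IsSemiAbelian n G) : (x / y) ^ n = 1 ↔ x ^ n = y ^ n := by
  rw [div_eq_mul_inv, hG, inv_pow, mul_inv_eq_one]

theorem mul_pow_eq_of_pow_eq_one (hG : IsSemiAbelian n G) (hx : x ^ n = 1) (a : G) :
    (x * a) ^ n = a ^ n :=
  hG.div_pow_eq_one_iff.1 (by rwa [mul_div_cancel_right])

theorem commutatorElement_pow_eq_one (hG : IsSemiAbelian n G) (hx : x ^ n = 1) (a : G) :
    ⁅x, a⁆ ^ n = 1 := by
  rw [show ⁅x, a⁆ = x / (a * x * a⁻¹) by rw [commutatorElement_def, div_eq_mul_inv]; group,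
    hG.div_pow_eq_one_iff, conj_pow, hx, mul_one, mul_inv_cancel]

/-- The elements killed by the `n`-th power. They form a subgroup because the group is
semi-`n`-abelian; for `n = 3` it is `Ω₁(G)`. -/
def powTorsion (hG : IsSemiAbelian n G) : Subgroup G where
  carrier := {g | g ^ n = 1}
  one_mem' := one_pow n
  mul_mem' {x y} hx hy := (hG.mul_pow_eq_of_pow_eq_one hx y).trans hy
  inv_mem' {x} hx := by rw [Set.mem_ofPred_eq, inv_pow, hx, inv_one]

instance normal_powTorsion (hG : IsSemiAbelian n G) : hG.powTorsion.Normal where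
  conj_mem x (hx : x ^ n = 1) a := show (a * x * a⁻¹) ^ n = 1 by
    rw [conj_pow, hx, mul_one, mul_inv_cancel]

theorem pow_eq_one_of_mem_normalClosure (hG : IsSemiAbelian n G) (hx : x ^ n = 1)
    (hy : y ∈ Subgroup.normalClosure {x}) : y ^ n = 1 :=
  have h : Subgroup.normalClosure {x} ≤ hG.powTorsion :=
    Subgroup.normalClosure_le_normal (Set.singleton_subset_iff.2 hx)
  h hy

theorem mul_conj_mul_conj_sq_eq_one (hG : IsSemiAbelian 3 G) (hx : x ^ 3 = 1) (a : G) :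
    x * (a * x * a⁻¹) * (a ^ 2 * x * (a ^ 2)⁻¹) = 1 := by
  calc x * (a * x * a⁻¹) * (a ^ 2 * x * (a ^ 2)⁻¹)
      = (x * a) ^ 3 * (a ^ 3)⁻¹ := by simp only [pow_succ, pow_zero]; group
    _ = 1 := by rw [hG.mul_pow_eq_of_pow_eq_one hx, mul_inv_cancel]

theorem commute_conj (hG : IsSemiAbelian 3 G) (hx : x ^ 3 = 1) (a : G) :
    Commute x (a * x * a⁻¹) := by
  have forward : x * (a * x * a⁻¹) * (a ^ 2 * x * (a ^ 2)⁻¹) = 1 :=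
    hG.mul_conj_mul_conj_sq_eq_one hx a
  have backward : (a ^ 2 * x * (a ^ 2)⁻¹) * ((a * x * a⁻¹) * x) = 1 := by
    calc (a ^ 2 * x * (a ^ 2)⁻¹) * ((a * x * a⁻¹) * x)
        = a ^ 2 * (x * (a⁻¹ * x * a⁻¹⁻¹) * (a⁻¹ ^ 2 * x * (a⁻¹ ^ 2)⁻¹)) * (a ^ 2)⁻¹ := by group
      _ = 1 := by rw [hG.mul_conj_mul_conj_sq_eq_one hx, mul_one, mul_inv_cancel]
  exact (eq_inv_of_mul_eq_one_left forward).trans (eq_inv_of_mul_eq_one_right backward).symm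

theorem commutator_commutator_self_eq_one (hG : IsSemiAbelian 3 G) (hx : x ^ 3 = 1) (a : G) :
    ⁅⁅x, a⁆, a⁆ = 1 := by
  have hprod := hG.mul_conj_mul_conj_sq_eq_one hx a
  have hcomm := hG.commute_conj hx a
  have hz : (a * x * a⁻¹) ^ 3 = 1 := by rw [conj_pow, hx, mul_one, mul_inv_cancel]
  have expand : ⁅⁅x, a⁆, a⁆ =
      x * (a * x * a⁻¹)⁻¹ * (a ^ 2 * x * (a ^ 2)⁻¹) * (a * x * a⁻¹)⁻¹ := by
    simp only [commutatorElement_def]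
    group
  rw [expand, eq_inv_of_mul_eq_one_right hprod, hcomm.eq]
  generalize a * x * a⁻¹ = z at *
  have hxz : x * z⁻¹ = z⁻¹ * x := hcomm.inv_right.eq
  calc x * z⁻¹ * (z * x)⁻¹ * z⁻¹ = z⁻¹ * x * (z * x)⁻¹ * z⁻¹ := by rw [hxz]
    _ = (z ^ 3)⁻¹ := by group
    _ = 1 := by rw [hz, inv_one]

theorem commutator_commutator_commutator_eq_one (hG : IsSemiAbelian 3 G) (hx : x ^ 3 = 1)
    (a b : G) : ⁅⁅⁅x, a⁆, b⁆, a⁆ = 1 := by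
  have := isMulCommutative_normalClosure_singleton (hG.commute_conj hx)
  have h2 : ⁅⁅⁅x, a⁆, b⁆, a⁆ ^ 2 = 1 :=
    commutator_commutator_commutator_sq_eq_one
      (fun _ hy => hG.commutator_commutator_self_eq_one (hG.pow_eq_one_of_mem_normalClosure hx hy))
      (Subgroup.subset_normalClosure (Set.mem_singleton x)) a b
  have h3 : ⁅⁅⁅x, a⁆, b⁆, a⁆ ^ 3 = 1 :=
    hG.commutatorElement_pow_eq_one
      (hG.commutatorElement_pow_eq_one (hG.commutatorElement_pow_eq_one hx a) b) a
  rwa [pow_succ, h2, one_mul] at h3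

end IsSemiAbelian

theorem semi3abelian_two_gen_omega1_le_Z3_general (G : Type*) [Group G]
    (hsemi : ∀ a b : G, (a * b) ^ 3 = 1 ↔ a ^ 3 * b ^ 3 = 1)
    (hgen : ∃ a b : G, Subgroup.closure {a, b} = ⊤) :
    Subgroup.closure {g : G | g ^ 3 = 1} ≤ Subgroup.upperCentralSeries G 3 := by
  have hG : IsSemiAbelian 3 G := hsemi
  obtain ⟨a, b, hab⟩ := hgen
  refine (Subgroup.closure_le _).2 fun x (hx : x ^ 3 = 1) => ?_
  refine mem_upperCentralSeries_succ_of_closure_eq_top hab fun c hc =>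
    mem_upperCentralSeries_succ_of_closure_eq_top hab fun d hd =>
      mem_upperCentralSeries_succ_of_closure_eq_top hab fun e he => Subgroup.mem_bot.2 ?_
  have repetition : c = d ∨ d = e ∨ c = e := by grind
  obtain rfl | rfl | rfl := repetition
  · rw [hG.commutator_commutator_self_eq_one hx, commutatorElement_one_left]
  · exact hG.commutator_commutator_self_eq_one (hG.commutatorElement_pow_eq_one hx c) d
  · exact hG.commutator_commutator_commutator_eq_one hx c d

/-- In a finite semi-3-abelian 3-group generated by two elements,
`Ω₁(G) ≤ Z₃(G)` (the third term of the upper central series). -/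
theorem semi3abelian_two_gen_omega1_le_Z3 (G : Type*) [Group G] [Finite G]
    (hG : IsPGroup 3 G)
    (hsemi : ∀ a b : G, (a * b) ^ 3 = 1 ↔ a ^ 3 * b ^ 3 = 1)
    (hgen : ∃ a b : G, Subgroup.closure {a, b} = ⊤) :
    Subgroup.closure {g : G | g ^ 3 = 1} ≤ upperCentralSeries G 3 := by
  exact semi3abelian_two_gen_omega1_le_Z3_general G hsemi hgen
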